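/- Let n ≥ 3 and define ψ : ℝ^n → ℝ by ψ(u) = max{ 2·Top_1(u), Top_3(u) }. Then ψ is a symmetric monotone norm, but the set function f(J) = ψ(1⟨J⟩), where 1 is the all-ones vector, is not submodular: for pairwise distinct indices j₁, j₂, j ∈ {1,…,n} one has f({j₁}) = 2, f({j₁,j}) = 2, f({j₁,j₂}) = 2 and f({j₁,j₂,j}) = 3, so f({j₁,j₂,j}) − f({j₁,j₂}) > f({j₁,j}) − f({j₁}), violating the diminishing-marginal-returns characterization of submodularity. -/

import Mathlib

/-- The top-`k` norm: the sum of the `k` largest values among `|u 1|, …, |u n|`,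
expressed as the supremum over all size-`k` subsets of the sum of absolute values. -/
noncomputable def topk {n : ℕ} (k : ℕ) (u : Fin n → ℝ) : ℝ :=
  sSup {t : ℝ | ∃ S : Finset (Fin n), S.card = k ∧ t = ∑ j ∈ S, |u j|}

/-- `p⟨J⟩`: the vector whose `j`-th entry is `p j` if `j ∈ J` and `0` otherwise. -/
def restrictVec {n : ℕ} (p : Fin n → ℝ) (J : Finset (Fin n)) : Fin n → ℝ :=
  fun j => if j ∈ J then p j else 0

/-! Symmetric monotone norms are closed under positive scaling and pointwise maxima, so `ψ`
inherits the norm axioms from the top-`k` norms. The top-`k` norm of the indicator vector of `J` is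
`min k |J|`, so `ψ(1⟨J⟩) = max (2 * min 1 |J|) (min 3 |J|)` takes the values `2, 2, 3` for
`|J| = 1, 2, 3`: the third element has a larger marginal value than the second. -/

open Finset

/-- Symmetric monotone norms on `ι → ℝ`. As in the paper, monotonicity is required only between
nonnegative vectors. -/
structure IsSymmetricMonotoneNorm {ι : Type*} (ψ : (ι → ℝ) → ℝ) : Prop where
  eq_zero_iff : ∀ u, ψ u = 0 ↔ u = 0
  add_le : ∀ u v, ψ (u + v) ≤ ψ u + ψ v
  smul_eq : ∀ (θ : ℝ) u, ψ (θ • u) = |θ| * ψ u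
  mono_of_nonneg : ∀ u v, 0 ≤ u → u ≤ v → ψ u ≤ ψ v
  comp_perm : ∀ u (π : Equiv.Perm ι), ψ (u ∘ π) = ψ u

namespace IsSymmetricMonotoneNorm

variable {ι : Type*} {ψ φ : (ι → ℝ) → ℝ}

theorem nonneg (hψ : IsSymmetricMonotoneNorm ψ) (u : ι → ℝ) : 0 ≤ ψ u := by
  have h_neg : ψ (-u) = ψ u := by simpa using hψ.smul_eq (-1) u
  have h_sum : 0 ≤ ψ u + ψ (-u) := by
    simpa [(hψ.eq_zero_iff 0).2 rfl] using hψ.add_le u (-u)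
  linarith

theorem const_smul (hψ : IsSymmetricMonotoneNorm ψ) {c : ℝ} (hc : 0 < c) :
    IsSymmetricMonotoneNorm (c • ψ) where
  eq_zero_iff u := by simp [hc.ne', hψ.eq_zero_iff u]
  add_le u v := by
    simpa [mul_add] using mul_le_mul_of_nonneg_left (hψ.add_le u v) hc.le
  smul_eq θ u := by simp [hψ.smul_eq θ u, mul_left_comm]
  mono_of_nonneg u v hu huv := mul_le_mul_of_nonneg_left (hψ.mono_of_nonneg u v hu huv) hc.le
  comp_perm u π := by simp [hψ.comp_perm u π]

theorem sup (hψ : IsSymmetricMonotoneNorm ψ) (hφ : IsSymmetricMonotoneNorm φ) :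
    IsSymmetricMonotoneNorm (ψ ⊔ φ) where
  eq_zero_iff u := by
    constructor
    · intro h
      have h_le : ψ u ≤ 0 := (le_max_left _ _).trans_eq h
      exact (hψ.eq_zero_iff u).1 (h_le.antisymm (hψ.nonneg u))
    · rintro rfl
      simp [(hψ.eq_zero_iff 0).2 rfl, (hφ.eq_zero_iff 0).2 rfl]
  add_le u v :=
    max_le ((hψ.add_le u v).trans (add_le_add (le_max_left _ _) (le_max_left _ _)))
      ((hφ.add_le u v).trans (add_le_add (le_max_right _ _) (le_max_right _ _)))
  smul_eq θ u := by
    simp only [Pi.sup_apply, hψ.smul_eq, hφ.smul_eq, mul_max_of_nonneg _ _ (abs_nonneg θ)]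
  mono_of_nonneg u v hu huv :=
    max_le_max (hψ.mono_of_nonneg u v hu huv) (hφ.mono_of_nonneg u v hu huv)
  comp_perm u π := by simp only [Pi.sup_apply, hψ.comp_perm, hφ.comp_perm]

end IsSymmetricMonotoneNorm

section TopK

variable {n k : ℕ}

theorem sum_abs_le_topk (u : Fin n → ℝ) {S : Finset (Fin n)} (hS : #S = k) :
    ∑ i ∈ S, |u i| ≤ topk k u := by
  refine le_csSup ⟨∑ i, |u i|, ?_⟩ ⟨S, hS, rfl⟩
  rintro _ ⟨T, -, rfl⟩
  exact sum_le_univ_sum_of_nonneg fun i => abs_nonneg (u i)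

-- For `n < k` the supremum is over the empty set, and `topk k u = 0`.
theorem topk_le {u : Fin n → ℝ} {c : ℝ} (hc : 0 ≤ c)
    (h : ∀ S : Finset (Fin n), #S = k → ∑ i ∈ S, |u i| ≤ c) : topk k u ≤ c := by
  refine Real.sSup_le ?_ hc
  rintro _ ⟨S, hS, rfl⟩
  exact h S hS

theorem topk_eq_iSup (k : ℕ) (u : Fin n → ℝ) :
    topk k u = ⨆ S : {S : Finset (Fin n) // #S = k}, ∑ i ∈ S.1, |u i| := by
  simp only [topk, iSup, Set.range, Subtype.exists, exists_prop, eq_comm]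

theorem topk_nonneg (k : ℕ) (u : Fin n → ℝ) : 0 ≤ topk k u := by
  rw [topk_eq_iSup]
  exact Real.iSup_nonneg fun S => sum_nonneg fun i _ => abs_nonneg (u i)

theorem topk_add_le (k : ℕ) (u v : Fin n → ℝ) : topk k (u + v) ≤ topk k u + topk k v := by
  refine topk_le (add_nonneg (topk_nonneg k u) (topk_nonneg k v)) fun S hS => ?_
  calc ∑ i ∈ S, |(u + v) i| ≤ ∑ i ∈ S, (|u i| + |v i|) :=
        sum_le_sum fun i _ => abs_add_le (u i) (v i)
    _ = ∑ i ∈ S, |u i| + ∑ i ∈ S, |v i| := sum_add_distrib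
    _ ≤ topk k u + topk k v := add_le_add (sum_abs_le_topk u hS) (sum_abs_le_topk v hS)

theorem topk_smul (k : ℕ) (θ : ℝ) (u : Fin n → ℝ) : topk k (θ • u) = |θ| * topk k u := by
  simp only [topk_eq_iSup, Pi.smul_apply, smul_eq_mul, abs_mul, ← mul_sum,
    Real.mul_iSup_of_nonneg (abs_nonneg θ)]

theorem topk_le_topk_of_abs_le (k : ℕ) {u v : Fin n → ℝ} (h : ∀ i, |u i| ≤ |v i|) :
    topk k u ≤ topk k v :=
  topk_le (topk_nonneg k v) fun _ hS =>
    (sum_le_sum fun i _ => h i).trans (sum_abs_le_topk v hS)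

theorem topk_comp_perm (k : ℕ) (u : Fin n → ℝ) (π : Equiv.Perm (Fin n)) :
    topk k (u ∘ π) = topk k u := by
  simp only [topk_eq_iSup]
  exact (π.finsetCongr.subtypeEquiv fun S => by simp).iSup_congr fun S => by simp

theorem abs_le_topk (hk : 0 < k) (hkn : k ≤ n) (u : Fin n → ℝ) (i : Fin n) :
    |u i| ≤ topk k u := by
  obtain ⟨S, hiS, hS⟩ := exists_superset_card_eq (s := {i}) (by simpa) (by simpa)
  calc |u i| ≤ ∑ j ∈ S, |u j| :=
        single_le_sum (fun j _ => abs_nonneg (u j)) (singleton_subset_iff.1 hiS)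
    _ ≤ topk k u := sum_abs_le_topk u hS

theorem isSymmetricMonotoneNorm_topk (hk : 0 < k) (hkn : k ≤ n) :
    IsSymmetricMonotoneNorm (topk k : (Fin n → ℝ) → ℝ) where
  eq_zero_iff u := by
    constructor
    · intro h
      ext i
      exact abs_nonpos_iff.1 ((abs_le_topk hk hkn u i).trans_eq h)
    · rintro rfl
      simpa using topk_smul k 0 (0 : Fin n → ℝ)
  add_le := topk_add_le k
  smul_eq := topk_smul k
  mono_of_nonneg _ _ hu huv :=
    topk_le_topk_of_abs_le k fun i => abs_le_abs_of_nonneg (hu i) (huv i)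
  comp_perm := topk_comp_perm k

theorem sum_abs_restrictVec_one (S J : Finset (Fin n)) :
    ∑ i ∈ S, |restrictVec (fun _ => (1 : ℝ)) J i| = #(S ∩ J) := by
  simp [restrictVec, apply_ite abs]

theorem topk_restrictVec_one (hkn : k ≤ n) (J : Finset (Fin n)) :
    topk k (restrictVec (fun _ => (1 : ℝ)) J) = (min k #J : ℕ) := by
  apply le_antisymm
  · refine topk_le (Nat.cast_nonneg _) fun S hS => ?_
    rw [sum_abs_restrictVec_one, Nat.cast_le, ← hS]
    exact le_min (card_le_card inter_subset_left) (card_le_card inter_subset_right)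
  · obtain ⟨T, hTJ, hT⟩ := exists_subset_card_eq (min_le_right k #J)
    obtain ⟨S, hTS, hS⟩ := exists_superset_card_eq (hT.trans_le (min_le_left k #J)) (by simpa)
    calc ((min k #J : ℕ) : ℝ) ≤ #(S ∩ J) := by
          rw [← hT]
          exact_mod_cast card_le_card (subset_inter hTS hTJ)
      _ = ∑ i ∈ S, |restrictVec (fun _ => (1 : ℝ)) J i| := (sum_abs_restrictVec_one S J).symm
      _ ≤ topk k (restrictVec (fun _ => (1 : ℝ)) J) := sum_abs_le_topk _ hS

end TopK

/-- For `n ≥ 3`, the function `ψ(u) = max{2·Top_1(u), Top_3(u)}` is a symmetric monotone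
norm, but the set function `f(J) = ψ(1⟨J⟩)` is not submodular: for pairwise distinct
`j₁, j₂, j` one has `f({j₁}) = 2`, `f({j₁,j}) = 2`, `f({j₁,j₂}) = 2`, `f({j₁,j₂,j}) = 3`,
so `f({j₁,j₂,j}) − f({j₁,j₂}) > f({j₁,j}) − f({j₁})`, violating the
diminishing-marginal-returns characterization of submodularity. -/
theorem max_two_top1_top3_norm_not_submodular {n : ℕ} (hn : 3 ≤ n)
    (ψ : (Fin n → ℝ) → ℝ)
    (hψ : ∀ u, ψ u = max (2 * topk 1 u) (topk 3 u))
    (f : Finset (Fin n) → ℝ)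
    (hf : ∀ J, f J = ψ (restrictVec (fun _ => (1 : ℝ)) J))
    (j₁ j₂ j : Fin n) (h12 : j₁ ≠ j₂) (h1j : j₁ ≠ j) (h2j : j₂ ≠ j) :
    ((∀ u, ψ u = 0 ↔ u = 0) ∧
      (∀ u v, ψ (u + v) ≤ ψ u + ψ v) ∧
      (∀ (θ : ℝ) u, ψ (θ • u) = |θ| * ψ u) ∧
      (∀ u v, (∀ i, 0 ≤ u i) → (∀ i, u i ≤ v i) → ψ u ≤ ψ v) ∧
      (∀ u (π : Equiv.Perm (Fin n)), ψ (u ∘ π) = ψ u)) ∧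
    f {j₁} = 2 ∧ f {j₁, j} = 2 ∧ f {j₁, j₂} = 2 ∧ f {j₁, j₂, j} = 3 ∧
    f {j₁, j₂, j} - f {j₁, j₂} > f {j₁, j} - f {j₁} := by
  have h1n : 1 ≤ n := by lia
  have hψ_norm : IsSymmetricMonotoneNorm ψ := by
    obtain rfl : ψ = (2 : ℝ) • topk 1 ⊔ topk 3 := funext hψ
    exact ((isSymmetricMonotoneNorm_topk one_pos h1n).const_smul two_pos).sup
      (isSymmetricMonotoneNorm_topk three_pos hn)
  have hf_card (J : Finset (Fin n)) : f J = (max (2 * min 1 #J) (min 3 #J) : ℕ) := by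
    rw [hf, hψ, topk_restrictVec_one h1n, topk_restrictVec_one hn]
    norm_cast
  have hf₁ : f {j₁} = 2 := by norm_num [hf_card]
  have hf₁j : f {j₁, j} = 2 := by norm_num [hf_card, card_pair h1j]
  have hf₁₂ : f {j₁, j₂} = 2 := by norm_num [hf_card, card_pair h12]
  have hf₁₂j : f {j₁, j₂, j} = 3 := by
    norm_num [hf_card, card_eq_three.2 ⟨j₁, j₂, j, h12, h1j, h2j, rfl⟩]
  refine ⟨⟨hψ_norm.eq_zero_iff, hψ_norm.add_le, hψ_norm.smul_eq, hψ_norm.mono_of_nonneg,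
    hψ_norm.comp_perm⟩, hf₁, hf₁j, hf₁₂, hf₁₂j, ?_⟩
  norm_num [hf₁, hf₁j, hf₁₂, hf₁₂j]
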